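/- Let A be a restricted quantized algebra over k (char k = p > 2) which is flat over k[[h]] (no h-torsion). Define s(x) = x^p − h^{p-1} x^{[p]}. Then s is additive, multiplicative, its image is central in A, and s(hx) = 0 for all x; hence s descends to a central multiplicative splitting map A/h → A, exhibiting A as a Frobenius-constant quantization of A/h. -/

import Mathlib

/-! Universal quantized polynomials.  We model the free quantized algebra
`Q(x,y)` (the Rees algebra of the PBW filtration on the free associative
algebra on two generators) inside the polynomial ring in one central variable
`h` over the free associative algebra: `x` corresponds to `Xe = x·h`,
`y` to `Ye = y·h`, and `h` to the polynomial variable `he`. -/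

/-- Ambient ring: polynomials in a central variable `h` over the free
associative `k`-algebra on two generators. -/
abbrev Amb (k : Type*) [Field k] : Type _ := Polynomial (FreeAlgebra k (Fin 2))

/-- The image of the generator `x` in the Rees-algebra model. -/
noncomputable def Xe (k : Type*) [Field k] : Amb k :=
  Polynomial.C (FreeAlgebra.ι k (0 : Fin 2)) * Polynomial.X

/-- The image of the generator `y` in the Rees-algebra model. -/
noncomputable def Ye (k : Type*) [Field k] : Amb k :=
  Polynomial.C (FreeAlgebra.ι k (1 : Fin 2)) * Polynomial.X

/-- The central parameter `h` in the Rees-algebra model. -/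
noncomputable def he (k : Type*) [Field k] : Amb k := Polynomial.X

/-- Evaluation relation for quantized polynomials.  `QEval k hA bra u v q w`
holds if the quantized polynomial `q` (an element of the free quantized algebra
on two generators `x, y`) evaluates to `w` when `x ↦ u`, `y ↦ v`, `h ↦ hA`,
products map to products, `k`-linear structure to `k`-linear structure, and the
universal bracket `{a,b}` (characterized by `h·{a,b} = a*b - b*a`) maps to the
bracket `bra` of the target algebra. -/
inductive QEval (k : Type*) [Field k] {A : Type*} [Ring A] [Algebra k A]
    (hA : A) (bra : A → A → A) (u v : A) : Amb k → A → Prop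
  | X : QEval k hA bra u v (Xe k) u
  | Y : QEval k hA bra u v (Ye k) v
  | h : QEval k hA bra u v (he k) hA
  | add {a b : Amb k} {x y : A} : QEval k hA bra u v a x → QEval k hA bra u v b y →
      QEval k hA bra u v (a + b) (x + y)
  | smul (c : k) {a : Amb k} {x : A} : QEval k hA bra u v a x →
      QEval k hA bra u v (c • a) (c • x)
  | mul {a b : Amb k} {x y : A} : QEval k hA bra u v a x → QEval k hA bra u v b y →
      QEval k hA bra u v (a * b) (x * y)
  | bracket {a b c : Amb k} {x y : A} : QEval k hA bra u v a x → QEval k hA bra u v b y →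
      he k * c = a * b - b * a → QEval k hA bra u v c (bra x y)

/-- `IsLval k p hA bra u v w` : `w` is the value at `(u, v)` of the universal
(Jacobson) polynomial `L(x,y)`, i.e. of the canonical quantized polynomial `L`
with `h^(p-1) · L = (x+y)^p - x^p - y^p` in the free quantized algebra. -/
def IsLval (k : Type*) [Field k] {A : Type*} [Ring A] [Algebra k A]
    (p : ℕ) (hA : A) (bra : A → A → A) (u v w : A) : Prop :=
  ∃ L : Amb k, he k ^ (p - 1) * L = (Xe k + Ye k) ^ p - Xe k ^ p - Ye k ^ p ∧
    QEval k hA bra u v L w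

/-- `IsPval k p hA bra u v w` : `w` is the value at `(u, v)` of the canonical
universal quantized polynomial `P(x,y)` with
`h^(p-1) · P = (x*y)^p - x^p * y^p` in the free quantized algebra. -/
def IsPval (k : Type*) [Field k] {A : Type*} [Ring A] [Algebra k A]
    (p : ℕ) (hA : A) (bra : A → A → A) (u v w : A) : Prop :=
  ∃ P : Amb k, he k ^ (p - 1) * P = (Xe k * Ye k) ^ p - Xe k ^ p * Ye k ^ p ∧
    QEval k hA bra u v P w

/-! Let `h ^ n S` denote the filtration of a quantized algebra `S`, in which `⁅S, h ^ n S⁆` lies in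
`h ^ (n + 1) S`.  In characteristic `p`, the derivative of `f ^ p` in `S[t]` is
`(ad f) ^ (p - 1) f'`, so its coefficients lie in `h ^ (p - 1) S`; for `f = t x + y` this says that
`x ↦ x ^ p` is additive modulo `h ^ (p - 1) S`.  It sends `x y` and `y x` to the same class, because
they differ by a multiple of `h`, and it sends squares to squares, so polarization makes it
multiplicative modulo `h ^ (p - 1) S` when `p` is odd.

The evaluation of quantized polynomials is a relation rather than a map, but its graph inside
`Amb k × A` is itself a quantized algebra.  Applied to this graph, the two congruences yield the
universal polynomials `L`, `P` and their values simultaneously, and the axioms of the restricted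
structure turn the congruences modulo `h ^ (p - 1)` into identities for `s`. -/

section

open Finset Polynomial

attribute [local instance] LieRing.ofAssociativeRing

theorem natCast_choose_prime_sub_one {R : Type*} [Ring R] {p : ℕ} (hp : p.Prime)
    (hR : (p : R) = 0) {m : ℕ} (hm : m < p) : ((p - 1).choose m : R) = (-1) ^ m := by
  induction m with
  | zero => simp
  | succ m ih =>
    have pascal : p.choose (m + 1) = (p - 1).choose m + (p - 1).choose (m + 1) :=
      Nat.choose_eq_choose_pred_add hp.pos m.succ_pos
    have vanish : (p.choose (m + 1) : R) = 0 := by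
      obtain ⟨c, hc⟩ := hp.dvd_choose_self m.succ_ne_zero hm
      rw [hc, Nat.cast_mul, hR, zero_mul]
    rw [pascal, Nat.cast_add, ih (by lia)] at vanish
    rw [pow_succ, mul_neg_one]
    exact eq_neg_of_add_eq_zero_right vanish

theorem sub_pow_prime_sub_one_of_commute {R : Type*} [Ring R] {p : ℕ} (hp : p.Prime)
    (hR : (p : R) = 0) {a b : R} (hab : Commute a b) :
    (a - b) ^ (p - 1) = ∑ m ∈ range p, a ^ m * b ^ (p - 1 - m) := by
  have choose_mul_neg_one_pow {m : ℕ} (hm : m < p) :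
      (-1 : R) ^ (p - 1 - m) * (p - 1).choose m = 1 := by
    rw [natCast_choose_prime_sub_one hp hR hm, ← pow_add, Nat.sub_add_cancel (by lia),
      ← natCast_choose_prime_sub_one hp hR (Nat.sub_lt hp.pos one_pos), Nat.choose_self,
      Nat.cast_one]
  rw [sub_eq_add_neg, hab.neg_right.add_pow, Nat.sub_add_cancel hp.one_le]
  refine sum_congr rfl fun m hm => ?_
  rw [neg_pow b, ((Commute.neg_one_left b).pow_pow _ _).eq, mul_assoc, mul_assoc,
    choose_mul_neg_one_pow (mem_range.mp hm), mul_one]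

section Adjoint

variable {R : Type*} [Ring R] {p : ℕ}

theorem natCast_moduleEnd_eq_zero (hR : (p : R) = 0) : (p : Module.End ℤ R) = 0 := by
  ext z
  rw [Module.End.natCast_apply, nsmul_eq_mul, hR, zero_mul, LinearMap.zero_apply]

theorem ad_pow_prime_sub_one (hp : p.Prime) (hR : (p : R) = 0) (a x : R) :
    (LieAlgebra.ad ℤ R a ^ (p - 1)) x = ∑ m ∈ range p, a ^ m * x * a ^ (p - 1 - m) := by
  rw [LieAlgebra.ad_eq_lmul_left_sub_lmul_right, Pi.sub_apply,
    sub_pow_prime_sub_one_of_commute hp (natCast_moduleEnd_eq_zero hR)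
      (LinearMap.commute_mulLeft_right a a)]
  simp only [LinearMap.pow_mulLeft, LinearMap.pow_mulRight, LinearMap.sum_apply,
    Module.End.mul_apply, LinearMap.mulLeft_apply, LinearMap.mulRight_apply, mul_assoc]

theorem ad_pow_prime (hp : p.Prime) (hR : (p : R) = 0) (a x : R) :
    (LieAlgebra.ad ℤ R a ^ p) x = ⁅a ^ p, x⁆ := by
  have hcomm : Commute (LinearMap.mulLeft ℤ a) (LinearMap.mulRight ℤ a) :=
    LinearMap.commute_mulLeft_right a a
  rw [LieAlgebra.ad_eq_lmul_left_sub_lmul_right, Pi.sub_apply, ← mul_pow_sub_one hp.ne_zero,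
    sub_pow_prime_sub_one_of_commute hp (natCast_moduleEnd_eq_zero hR) hcomm,
    hcomm.mul_geom_sum₂, LinearMap.pow_mulLeft, LinearMap.pow_mulRight]
  rfl

theorem derivative_pow_eq_sum (f : R[X]) (n : ℕ) :
    derivative (f ^ n) = ∑ m ∈ range n, f ^ m * derivative f * f ^ (n - 1 - m) := by
  induction n with
  | zero => simp
  | succ n ih =>
    rw [pow_succ, derivative_mul, ih, sum_range_succ, sum_mul, Nat.add_sub_cancel, Nat.sub_self,
      pow_zero, mul_one]
    congr 1
    refine sum_congr rfl fun m hm => ?_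
    rw [mul_assoc, ← pow_succ, Nat.sub_right_comm,
      Nat.sub_add_cancel (Nat.sub_pos_of_lt (mem_range.mp hm))]

theorem derivative_pow_prime_eq_ad_pow (hp : p.Prime) (hR : (p : R) = 0) (f : R[X]) :
    derivative (f ^ p) = (LieAlgebra.ad ℤ R[X] f ^ (p - 1)) (derivative f) := by
  have hRX : (p : R[X]) = 0 := by rw [← C_eq_natCast, hR, C_0]
  rw [derivative_pow_eq_sum, ad_pow_prime_sub_one hp hRX]

end Adjoint

theorem eval_one_pow {R : Type*} [Semiring R] (f : R[X]) (n : ℕ) :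
    (f ^ n).eval 1 = f.eval 1 ^ n :=
  map_pow (eval₂RingHom' (RingHom.id R) 1 fun _ => Commute.one_right _) f n

theorem add_pow_eq_sum_coeff {R : Type*} [Semiring R] (x y : R) {n : ℕ} (hn : n ≠ 0) :
    (x + y) ^ n = ∑ i ∈ range (n - 1), ((C x * X + C y) ^ n).coeff (i + 1) + y ^ n + x ^ n := by
  have hf : (C x * X + C y).natDegree ≤ 1 := natDegree_linear_le
  have eval_f : (C x * X + C y).eval 1 = x + y := by simp
  have degree_pow : ((C x * X + C y) ^ n).natDegree < n + 1 := by
    simpa [Nat.lt_succ_iff] using natDegree_pow_le_of_le n hf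
  have coeff_top : ((C x * X + C y) ^ n).coeff n = x ^ n := by
    simpa using coeff_pow_of_natDegree_le (m := n) hf
  have coeff_bot : ((C x * X + C y) ^ n).coeff 0 = y ^ n :=
    (map_pow constantCoeff (C x * X + C y) n).trans (by simp)
  rw [← eval_f, ← eval_one_pow, eval_eq_sum_range' degree_pow, sum_range_succ,
    ← Nat.sub_add_cancel (Nat.pos_of_ne_zero hn), sum_range_succ']
  simp only [one_pow, mul_one, Nat.sub_add_cancel (Nat.pos_of_ne_zero hn), coeff_top, coeff_bot]

theorem mem_of_nsmul_mem_of_coprime {M : Type*} [AddCommGroup M] {I : AddSubgroup M} {m n : ℕ}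
    (hmn : m.Coprime n) {a : M} (hm : m • a ∈ I) (hn : n • a ∈ I) : a ∈ I := by
  obtain ⟨u, v, huv⟩ := Nat.isCoprime_iff_coprime.mpr hmn
  have bezout : u • m • a + v • n • a = a := by
    rw [← natCast_zsmul a m, ← natCast_zsmul a n, smul_smul, smul_smul, ← add_smul, huv, one_smul]
  exact bezout ▸ I.add_mem (I.zsmul_mem hm u) (I.zsmul_mem hn v)

/-- A non-unital subring `S` is quantized with parameter `h` if it contains `h` as a central element
and is closed under the bracket `h⁻¹ (a b - b a)`.  Since `h` may be a zero divisor, the bracket is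
only asked to exist. -/
structure IsQuantizedSubring {B : Type*} [Ring B] (h : B) (S : NonUnitalSubring B) : Prop where
  mem : h ∈ S
  commute : ∀ a ∈ S, Commute h a
  exists_mul_eq_lie : ∀ a ∈ S, ∀ b ∈ S, ∃ c ∈ S, h * c = ⁅a, b⁆

/-- The `n`-th step `h ^ n S` of the `h`-adic filtration of `S`. -/
def hadicFiltration {B : Type*} [Ring B] (h : B) (S : NonUnitalSubring B) (n : ℕ) :
    AddSubgroup B :=
  S.toAddSubgroup.map (AddMonoidHom.mulLeft (h ^ n))

section QuantizedSubring

variable {B : Type*} [Ring B] {h : B} {S : NonUnitalSubring B} {p n : ℕ} {a b x y : B}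

theorem pow_mem_of_ne_zero (ha : a ∈ S) (hn : n ≠ 0) : a ^ n ∈ S := by
  induction n, Nat.one_le_iff_ne_zero.mpr hn using Nat.le_induction with
  | base => rwa [pow_one]
  | succ n hn ih => exact pow_succ a n ▸ S.mul_mem (ih (by lia)) ha

theorem mem_hadicFiltration_zero (ha : a ∈ S) : a ∈ hadicFiltration h S 0 :=
  ⟨a, ha, by simp⟩

theorem mul_mem_hadicFiltration_right (ha : a ∈ S) (hb : b ∈ hadicFiltration h S n) :
    b * a ∈ hadicFiltration h S n := by
  obtain ⟨c, hc, rfl⟩ := hb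
  exact ⟨c * a, S.mul_mem hc ha, (mul_assoc _ _ _).symm⟩

namespace IsQuantizedSubring

theorem mul_mem_hadicFiltration_left (hS : IsQuantizedSubring h S) (ha : a ∈ S)
    (hb : b ∈ hadicFiltration h S n) : a * b ∈ hadicFiltration h S n := by
  obtain ⟨c, hc, rfl⟩ := hb
  exact ⟨a * c, S.mul_mem ha hc, ((hS.commute a ha).pow_left n).left_comm c⟩

theorem hadicFiltration_succ_le (hS : IsQuantizedSubring h S) :
    hadicFiltration h S (n + 1) ≤ hadicFiltration h S n := by
  rintro _ ⟨c, hc, rfl⟩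
  refine ⟨h * c, S.mul_mem hS.mem hc, ?_⟩
  simp only [AddMonoidHom.coe_mulLeft, pow_succ, mul_assoc]

theorem lie_mem (hS : IsQuantizedSubring h S) (ha : a ∈ S) (hb : b ∈ hadicFiltration h S n) :
    ⁅a, b⁆ ∈ hadicFiltration h S (n + 1) := by
  obtain ⟨d, hd, rfl⟩ := hb
  obtain ⟨c, hc, hcd⟩ := hS.exists_mul_eq_lie a ha d hd
  refine ⟨c, hc, ?_⟩
  simp only [AddMonoidHom.coe_mulLeft, Ring.lie_def] at hcd ⊢
  rw [pow_succ, mul_assoc, hcd, mul_sub, ((hS.commute a ha).pow_left n).left_comm, mul_assoc]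

theorem ad_pow_mem (hS : IsQuantizedSubring h S) (ha : a ∈ S) (hb : b ∈ S) (n : ℕ) :
    (LieAlgebra.ad ℤ B a ^ n) b ∈ hadicFiltration h S n := by
  induction n with
  | zero => exact mem_hadicFiltration_zero hb
  | succ n ih =>
    rw [pow_succ', Module.End.mul_apply, LieAlgebra.ad_apply]
    exact hS.lie_mem ha ih

theorem coeff_lie_mem (hS : IsQuantizedSubring h S) {f g : B[X]} (hf : ∀ i, f.coeff i ∈ S)
    (hg : ∀ i, g.coeff i ∈ hadicFiltration h S n) (i : ℕ) :
    ⁅f, g⁆.coeff i ∈ hadicFiltration h S (n + 1) := by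
  rw [Ring.lie_def, coeff_sub, coeff_mul, coeff_mul, ← Nat.sum_antidiagonal_swap, ← sum_sub_distrib]
  exact sum_mem fun ij _ => hS.lie_mem (hf ij.swap.1) (hg ij.swap.2)

theorem coeff_ad_pow_mem (hS : IsQuantizedSubring h S) {f g : B[X]} (hf : ∀ i, f.coeff i ∈ S)
    (hg : ∀ i, g.coeff i ∈ S) (n i : ℕ) :
    ((LieAlgebra.ad ℤ B[X] f ^ n) g).coeff i ∈ hadicFiltration h S n := by
  induction n generalizing i with
  | zero => exact mem_hadicFiltration_zero (hg i)
  | succ n ih =>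
    rw [pow_succ', Module.End.mul_apply, LieAlgebra.ad_apply]
    exact hS.coeff_lie_mem hf ih i

theorem coeff_pow_prime_mem (hS : IsQuantizedSubring h S) (hp : p.Prime) (hB : (p : B) = 0)
    {f : B[X]} (hf : ∀ i, f.coeff i ∈ S) {i : ℕ} (hi : ¬p ∣ i + 1) :
    (f ^ p).coeff (i + 1) ∈ hadicFiltration h S (p - 1) := by
  have coeff_derivative_eq (g : B[X]) (j : ℕ) :
      (derivative g).coeff j = (j + 1) • g.coeff (j + 1) := by
    rw [coeff_derivative, nsmul_eq_mul', Nat.cast_succ]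
  have derivative_mem : ∀ j, (derivative f).coeff j ∈ S := fun j =>
    coeff_derivative_eq f j ▸ S.nsmul_mem (hf _) _
  refine mem_of_nsmul_mem_of_coprime (hp.coprime_iff_not_dvd.mpr hi) ?_ ?_
  · rw [nsmul_eq_mul, hB, zero_mul]
    exact zero_mem _
  · rw [← coeff_derivative_eq, derivative_pow_prime_eq_ad_pow hp hB]
    exact hS.coeff_ad_pow_mem hf derivative_mem (p - 1) i

theorem add_pow_prime_sub_mem (hS : IsQuantizedSubring h S) (hp : p.Prime) (hB : (p : B) = 0)
    (hx : x ∈ S) (hy : y ∈ S) :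
    (x + y) ^ p - (x ^ p + y ^ p) ∈ hadicFiltration h S (p - 1) := by
  have coeff_mem (i : ℕ) : (C x * X + C y).coeff i ∈ S := by
    rcases i with _ | _ | i <;> simp [coeff_X, coeff_C, hx, hy]
  rw [add_pow_eq_sum_coeff x y hp.ne_zero, add_assoc, add_comm (y ^ p), add_sub_cancel_right]
  refine sum_mem fun i hi => hS.coeff_pow_prime_mem hp hB coeff_mem ?_
  exact Nat.not_dvd_of_pos_of_lt i.succ_pos (by have := mem_range.mp hi; lia)

theorem lie_pow_prime_mem (hS : IsQuantizedSubring h S) (hp : p.Prime) (hB : (p : B) = 0)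
    (hx : x ∈ S) (hy : y ∈ S) : ⁅x ^ p, y⁆ ∈ hadicFiltration h S (p - 1) := by
  apply hS.hadicFiltration_succ_le
  rw [Nat.sub_add_cancel hp.one_le, ← ad_pow_prime hp hB]
  exact hS.ad_pow_mem hx hy p

theorem mul_pow_prime_swap_sub_mem (hS : IsQuantizedSubring h S) (hp : p.Prime)
    (hB : (p : B) = 0) (hx : x ∈ S) (hy : y ∈ S) :
    (y * x) ^ p - (x * y) ^ p ∈ hadicFiltration h S (p - 1) := by
  obtain ⟨c, hc, hcyx⟩ := hS.exists_mul_eq_lie y hy x hx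
  have hyx : y * x = x * y + h * c := by rw [hcyx, Ring.lie_def]; abel
  have hadd := hS.add_pow_prime_sub_mem hp hB (S.mul_mem hx hy) (S.mul_mem hS.mem hc)
  have hpow : (h * c) ^ p ∈ hadicFiltration h S (p - 1) := by
    refine ⟨h * c ^ p, S.mul_mem hS.mem (pow_mem_of_ne_zero hc hp.ne_zero), ?_⟩
    rw [(hS.commute c hc).mul_pow, AddMonoidHom.coe_mulLeft, ← mul_assoc,
      pow_sub_one_mul hp.ne_zero]
  rw [hyx]
  convert add_mem hadd hpow using 1
  abel

theorem polarization_pow_prime_sub_mem (hS : IsQuantizedSubring h S) (hp : p.Prime)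
    (hB : (p : B) = 0) (hx : x ∈ S) (hy : y ∈ S) :
    (x * y + y * x) ^ p - (x ^ p * y ^ p + y ^ p * x ^ p) ∈ hadicFiltration h S (p - 1) := by
  have hxx := S.mul_mem hx hx
  have hyy := S.mul_mem hy hy
  have hxp := pow_mem_of_ne_zero hx hp.ne_zero
  have hyp := pow_mem_of_ne_zero hy hp.ne_zero
  have hxyp := pow_mem_of_ne_zero (S.add_mem hx hy) hp.ne_zero
  have sq_pow (z : B) : (z * z) ^ p = z ^ p * z ^ p := (Commute.refl z).mul_pow p
  have sq_add : x * x + y * y + (x * y + y * x) = (x + y) * (x + y) := by noncomm_ring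
  have hsum := hS.add_pow_prime_sub_mem hp hB hx hy
  have hsq := hS.add_pow_prime_sub_mem hp hB hxx hyy
  have hexpand := hS.add_pow_prime_sub_mem hp hB (S.add_mem hxx hyy)
    (S.add_mem (S.mul_mem hx hy) (S.mul_mem hy hx))
  rw [sq_add, sq_pow] at hexpand
  rw [sq_pow, sq_pow] at hsq
  have hproduct : (x + y) ^ p * (x + y) ^ p - (x ^ p + y ^ p) * (x ^ p + y ^ p) ∈
      hadicFiltration h S (p - 1) := by
    convert add_mem (hS.mul_mem_hadicFiltration_left hxyp hsum)
      (mul_mem_hadicFiltration_right (S.add_mem hxp hyp) hsum) using 1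
    rw [mul_sub, sub_mul]
    abel
  convert sub_mem (sub_mem hproduct hexpand) hsq using 1
  noncomm_ring

theorem mul_pow_prime_sub_mem (hS : IsQuantizedSubring h S) (hp : p.Prime) (hB : (p : B) = 0)
    (hx : x ∈ S) (hy : y ∈ S) :
    (x * y) ^ p - x ^ p * y ^ p ∈ hadicFiltration h S (p - 1) := by
  rcases hp.eq_two_or_odd' with rfl | hodd
  · have hyx := hS.lie_mem hy (mem_hadicFiltration_zero hx)
    convert hS.mul_mem_hadicFiltration_left hx (mul_mem_hadicFiltration_right hy hyx) using 1
    rw [Ring.lie_def]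
    noncomm_ring
  have hxy := S.mul_mem hx hy
  have hyx := S.mul_mem hy hx
  have hpolar := hS.polarization_pow_prime_sub_mem hp hB hx hy
  have hadd := hS.add_pow_prime_sub_mem hp hB hxy hyx
  have hswap := hS.mul_pow_prime_swap_sub_mem hp hB hx hy
  have hlie := hS.lie_pow_prime_mem hp hB hx (pow_mem_of_ne_zero hy hp.ne_zero)
  refine mem_of_nsmul_mem_of_coprime hodd.coprime_two_right ?_ ?_
  · rw [nsmul_eq_mul, hB, zero_mul]
    exact zero_mem _
  · convert sub_mem (sub_mem (sub_mem hpolar hadd) hswap) hlie using 1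
    rw [Ring.lie_def]
    abel

end IsQuantizedSubring

end QuantizedSubring

theorem natCast_eq_zero_of_charP (k : Type*) {B : Type*} [CommSemiring k] [Semiring B]
    [Algebra k B] (p : ℕ) [CharP k p] : (p : B) = 0 := by
  rw [← map_natCast (algebraMap k B), CharP.cast_eq_zero, map_zero]

theorem mul_dvd_lie_of_dvd {R : Type*} [Ring R] {t a b : R} (ht : ∀ r, Commute t r)
    (ha : t ∣ a) (hb : t ∣ b) : t * t ∣ ⁅a, b⁆ := by
  obtain ⟨a, rfl⟩ := ha
  obtain ⟨b, rfl⟩ := hb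
  refine ⟨⁅a, b⁆, ?_⟩
  simp only [Ring.lie_def, mul_sub, mul_assoc, (ht a).symm.left_comm, (ht b).symm.left_comm]

namespace QEval

variable {k : Type*} [Field k] {A : Type*} [Ring A] [Algebra k A] {h : A} {bra : A → A → A}
  {u v w : A} {q : Amb k}

theorem he_dvd (hq : QEval k h bra u v q w) : he k ∣ q := by
  induction hq with
  | X | Y => exact ⟨_, X_mul.symm⟩
  | h => exact dvd_rfl
  | add _ _ ha hb => exact dvd_add ha hb
  | smul c _ ha => exact dvd_smul_of_dvd c ha
  | mul _ _ ha _ => exact ha.mul_right _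
  | bracket _ _ hc ha hb =>
    obtain ⟨d, hd⟩ := mul_dvd_lie_of_dvd commute_X ha hb
    rw [Ring.lie_def, ← hc, mul_assoc] at hd
    exact ⟨d, isRegular_X.left hd⟩

/-- The graph of the evaluation relation at `(u, v)`. -/
def graph (k : Type*) [Field k] {A : Type*} [Ring A] [Algebra k A] (h : A) (bra : A → A → A)
    (u v : A) : NonUnitalSubring (Amb k × A) where
  carrier := {z | QEval k h bra u v z.1 z.2}
  zero_mem' := by simpa using QEval.smul (0 : k) (QEval.h : QEval k h bra u v _ _)
  add_mem' := QEval.add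
  mul_mem' := QEval.mul
  neg_mem' ha := by simpa using QEval.smul (-1 : k) ha

theorem isQuantizedSubring_graph (hcomm : ∀ a, Commute h a)
    (hbra : ∀ a b : A, h * bra a b = ⁅a, b⁆) (u v : A) :
    IsQuantizedSubring (he k, h) (graph k h bra u v) where
  mem := QEval.h
  commute z _ := Prod.ext X_mul (hcomm z.2)
  exists_mul_eq_lie a ha b hb := by
    obtain ⟨d, hd⟩ := mul_dvd_lie_of_dvd commute_X (he_dvd ha) (he_dvd hb)
    rw [mul_assoc] at hd
    exact ⟨(he k * d, bra a.2 b.2), QEval.bracket ha hb hd.symm, Prod.ext hd.symm (hbra _ _)⟩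

end QEval

/-- The map `s(x) = x ^ p - h ^ (p - 1) x^[p]`, where `pf x` stands for `x^[p]`. -/
def splittingMap {A : Type*} [Ring A] (p : ℕ) (h : A) (pf : A → A) (x : A) : A :=
  x ^ p - h ^ (p - 1) * pf x

section SplittingMap

variable {k A : Type*} [Field k] [Ring A] [Algebra k A] {p : ℕ} {h : A} {bra : A → A → A}
  {pf : A → A}

theorem exists_isLval [CharP k p] (hp : p.Prime) (hcomm : ∀ a, Commute h a)
    (hbra : ∀ a b : A, h * bra a b = ⁅a, b⁆) (x y : A) :
    ∃ w, IsLval k p h bra x y w ∧ h ^ (p - 1) * w = (x + y) ^ p - (x ^ p + y ^ p) := by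
  have hS := QEval.isQuantizedSubring_graph (k := k) hcomm hbra x y
  obtain ⟨⟨L, w⟩, hLw, hpow⟩ := hS.add_pow_prime_sub_mem hp (natCast_eq_zero_of_charP k p)
    (x := (Xe k, x)) (y := (Ye k, y)) QEval.X QEval.Y
  have hL : he k ^ (p - 1) * L = (Xe k + Ye k) ^ p - (Xe k ^ p + Ye k ^ p) :=
    congrArg Prod.fst hpow
  exact ⟨w, ⟨L, by rw [hL, sub_sub], hLw⟩, congrArg Prod.snd hpow⟩

theorem exists_isPval [CharP k p] (hp : p.Prime) (hcomm : ∀ a, Commute h a)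
    (hbra : ∀ a b : A, h * bra a b = ⁅a, b⁆) (x y : A) :
    ∃ w, IsPval k p h bra x y w ∧ h ^ (p - 1) * w = (x * y) ^ p - x ^ p * y ^ p := by
  have hS := QEval.isQuantizedSubring_graph (k := k) hcomm hbra x y
  obtain ⟨⟨P, w⟩, hPw, hpow⟩ := hS.mul_pow_prime_sub_mem hp (natCast_eq_zero_of_charP k p)
    (x := (Xe k, x)) (y := (Ye k, y)) QEval.X QEval.Y
  exact ⟨w, ⟨P, congrArg Prod.fst hpow, hPw⟩, congrArg Prod.snd hpow⟩

theorem splittingMap_add [CharP k p] (hp : p.Prime) (hcomm : ∀ a, Commute h a)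
    (hbra : ∀ a b : A, h * bra a b = ⁅a, b⁆)
    (hL : ∀ x y w : A, IsLval k p h bra x y w → pf (x + y) = pf x + pf y + w) (x y : A) :
    splittingMap p h pf (x + y) = splittingMap p h pf x + splittingMap p h pf y := by
  obtain ⟨w, hw, hpow⟩ := exists_isLval (k := k) hp hcomm hbra x y
  rw [splittingMap, splittingMap, splittingMap, hL x y w hw, mul_add, mul_add, hpow]
  abel

theorem splittingMap_mul [CharP k p] (hp : p.Prime) (hcomm : ∀ a, Commute h a)
    (hbra : ∀ a b : A, h * bra a b = ⁅a, b⁆)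
    (hP : ∀ x y w : A, IsPval k p h bra x y w →
      pf (x * y) = x ^ p * pf y + pf x * y ^ p - h ^ (p - 1) * (pf x * pf y) + w) (x y : A) :
    splittingMap p h pf (x * y) = splittingMap p h pf x * splittingMap p h pf y := by
  obtain ⟨w, hw, hpow⟩ := exists_isPval (k := k) hp hcomm hbra x y
  have hleft (a b : A) : a * (h ^ (p - 1) * b) = h ^ (p - 1) * (a * b) :=
    ((hcomm a).pow_left (p - 1)).symm.left_comm b
  rw [splittingMap, splittingMap, splittingMap, hP x y w hw, mul_add, hpow]
  simp only [mul_sub, sub_mul, mul_add, mul_assoc, hleft]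
  abel

theorem ad_pow_eq_pow_mul_iterate (hcomm : ∀ a, Commute h a)
    (hbra : ∀ a b : A, h * bra a b = ⁅a, b⁆) (x y : A) (n : ℕ) :
    (LieAlgebra.ad ℤ A x ^ n) y = h ^ n * (bra x)^[n] y := by
  induction n with
  | zero => simp
  | succ n ih =>
    rw [pow_succ', Module.End.mul_apply, ih, LieAlgebra.ad_apply, Function.iterate_succ_apply',
      pow_succ, mul_assoc, hbra, Ring.lie_def, Ring.lie_def, mul_sub,
      ((hcomm x).pow_left n).left_comm, mul_assoc]

theorem splittingMap_commute (hp : p.Prime) (hA : (p : A) = 0) (hcomm : ∀ a, Commute h a)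
    (hbra : ∀ a b : A, h * bra a b = ⁅a, b⁆)
    (had : ∀ x y : A, bra (pf x) y = (bra x)^[p] y) (x y : A) :
    Commute (splittingMap p h pf x) y := by
  have hlie : ⁅x ^ p, y⁆ = ⁅h ^ (p - 1) * pf x, y⁆ := calc
    ⁅x ^ p, y⁆ = h ^ p * bra (pf x) y := by
      rw [← ad_pow_prime hp hA, ad_pow_eq_pow_mul_iterate hcomm hbra, had]
    _ = h ^ (p - 1) * ⁅pf x, y⁆ := by rw [← pow_sub_one_mul hp.ne_zero, mul_assoc, hbra]
    _ = ⁅h ^ (p - 1) * pf x, y⁆ := by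
      rw [Ring.lie_def, Ring.lie_def, mul_sub, mul_assoc,
        ((hcomm y).pow_left (p - 1)).symm.left_comm]
  rw [commute_iff_lie_eq, splittingMap, sub_lie, hlie, sub_self]

theorem splittingMap_self (hp : p ≠ 0) (hh : pf h = h) : splittingMap p h pf h = 0 := by
  rw [splittingMap, hh, pow_sub_one_mul hp, sub_self]

end SplittingMap

end

theorem statement13_general {k A : Type*} [Field k] [Ring A] [Algebra k A] {p : ℕ}
    (hp : p.Prime) [CharP k p] (h : A) (hcomm : ∀ a, Commute h a) (bra : A → A → A)
    (hbra : ∀ a b : A, h * bra a b = a * b - b * a) (pf : A → A)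
    (hres1 : ∀ x y : A, bra (pf x) y = (bra x)^[p] y)
    (hresL : ∀ x y w : A, IsLval k p h bra x y w → pf (x + y) = pf x + pf y + w)
    (hresh : pf h = h)
    (hresP : ∀ x y w : A, IsPval k p h bra x y w →
      pf (x * y) = x ^ p * pf y + pf x * y ^ p - h ^ (p - 1) * (pf x * pf y) + w) :
    (∀ x y, splittingMap p h pf (x + y) = splittingMap p h pf x + splittingMap p h pf y) ∧
    (∀ x y, splittingMap p h pf (x * y) = splittingMap p h pf x * splittingMap p h pf y) ∧
    (∀ x y, splittingMap p h pf x * y = y * splittingMap p h pf x) ∧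
    (∀ x, splittingMap p h pf (h * x) = 0) ∧
    (∀ x y, (∃ c, x - y = h * c) → splittingMap p h pf x = splittingMap p h pf y) := by
  have map_add := splittingMap_add hp hcomm hbra hresL
  have map_mul := splittingMap_mul hp hcomm hbra hresP
  have map_h_mul (x : A) : splittingMap p h pf (h * x) = 0 := by
    rw [map_mul, splittingMap_self hp.ne_zero hresh, zero_mul]
  refine ⟨map_add, map_mul,
    splittingMap_commute hp (natCast_eq_zero_of_charP k p) hcomm hbra hres1, map_h_mul, ?_⟩
  rintro x y ⟨c, hc⟩
  rw [← sub_add_cancel x y, hc, map_add, map_h_mul, zero_add]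

/-- Let `A` be a restricted quantized algebra over `k` (`char k = p > 2`) which
is flat (has no `h`-torsion) over `k[[h]]`.  Define `s(x) = x^p - h^(p-1)·x^[p]`.
Then `s` is additive, multiplicative, has central image, vanishes on `h·A`
(hence descends to a map `A/h → A`), exhibiting `A` as a Frobenius-constant
quantization of `A/h`. -/
theorem statement13 {k A : Type*} [Field k] [Ring A]
    [Algebra (PowerSeries k) A] [Algebra k A]
    [IsScalarTower k (PowerSeries k) A]
    {p : ℕ} (hp : p.Prime) (hp2 : 2 < p) [CharP k p]
    (h : A) (hdef : h = algebraMap (PowerSeries k) A PowerSeries.X)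
    -- flatness: no h-torsion
    (htf : ∀ a : A, h * a = 0 → a = 0)
    (bra : A → A → A)
    -- quantized algebra axioms for the bracket
    (hbra : ∀ a b : A, h * bra a b = a * b - b * a)
    (hbadd : ∀ x y z : A, bra (x + y) z = bra x z + bra y z)
    (hbsmul : ∀ (c : k) (x y : A), bra (c • x) y = c • bra x y)
    (hbh : ∀ x y : A, bra (h * x) y = h * bra x y)
    (hbanti : ∀ x y : A, bra x y = - bra y x)
    (hbjac : ∀ x y z : A, bra x (bra y z) = bra (bra x y) z + bra y (bra x z))
    (hbleib : ∀ x y z : A, bra x (y * z) = bra x y * z + y * bra x z)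
    -- the restricted structure x ↦ pf x = x^[p]
    (pf : A → A)
    (hres1 : ∀ x y : A, bra (pf x) y = (fun z => bra x z)^[p] y)
    (hres2 : ∀ (c : k) (x : A), pf (c • x) = c ^ p • pf x)
    (hresL : ∀ x y w : A, IsLval k p h bra x y w →
      pf (x + y) = pf x + pf y + w)
    (hresh : pf h = h)
    (hresP : ∀ x y w : A, IsPval k p h bra x y w →
      pf (x * y) = x ^ p * pf y + pf x * y ^ p - h ^ (p - 1) * (pf x * pf y) + w) :
    -- s(x) := x^p - h^(p-1)·x^[p] is additive, multiplicative, central,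
    -- kills h·A, and descends modulo h
    (∀ x y : A, (x + y) ^ p - h ^ (p - 1) * pf (x + y)
        = (x ^ p - h ^ (p - 1) * pf x) + (y ^ p - h ^ (p - 1) * pf y)) ∧
    (∀ x y : A, (x * y) ^ p - h ^ (p - 1) * pf (x * y)
        = (x ^ p - h ^ (p - 1) * pf x) * (y ^ p - h ^ (p - 1) * pf y)) ∧
    (∀ x y : A, (x ^ p - h ^ (p - 1) * pf x) * y = y * (x ^ p - h ^ (p - 1) * pf x)) ∧
    (∀ x : A, (h * x) ^ p - h ^ (p - 1) * pf (h * x) = 0) ∧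
    (∀ x y : A, (∃ c : A, x - y = h * c) →
      x ^ p - h ^ (p - 1) * pf x = y ^ p - h ^ (p - 1) * pf y) := by
  subst hdef
  exact statement13_general hp _ (Algebra.commute_algebraMap_left _) bra hbra pf hres1 hresL hresh
    hresP
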